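/- arXiv:1709.04292 — 2 statements merged into one kernel-verified Lean document; each statement's English description precedes it below -/
import Mathlib

section
/- Let F_1,…,F_d be d subsets of ℤ and let I ⊂ ℤ be an interval. Assume that for some ℓ ≥ 1, each F_i is of order ℓ inside I, and that |I| ≥ η·c_ℓ. Set F := ⋂_{i=1}^d F_i. Then: (1) the density of F inside I satisfies |F ∩ I| / |I| ≥ (1 − η)^{2ℓ}; (2) for each integer c with 1 ≤ c ≤ c_1, the proportion of integers of F ∩ I lying in pieces of F ∩ I of size ≤ c is at most K_1·( c/c_1 + (c_1/c_2)·(1−η)^{−4} + ⋯ + (c_{ℓ−1}/c_ℓ)·(1−η)^{−2ℓ} ). -/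
/-!
Call `F'` the intersection of the top-level approximations `G i ⊇ F i`. Since holes of `G i` are
separated by pieces of length `c ℓ`, each `G i` has at most `|I| / c ℓ + 1` holes in `I`, and the
hypothesis `|I| ≥ η c ℓ` turns this into `(1 + 1/η) |I| / c ℓ`. Multiplying by the maximal hole
size and summing over `i` shows that `F'` has density at least `1 - η` in `I`; and since a piece
of `F'` starts either at the left end of `I` or just after a hole of some `G i`, there are at most
`d (1 + 2/η) |I| / c ℓ` of them (`one_level`). For `ℓ = 1` this is already the result.

For larger `ℓ`, each piece of `F'` is contained in a piece of every `G i`, and order is inherited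
by subintervals (`IsOrder.mono`), so every `F i` has order `ℓ - 1` in it. The pieces of length
less than `η c (ℓ-1)` are few, so they occupy a proportion at most `η (1 - η) K₁ c (ℓ-1) / c ℓ` of
`I`; the induction hypothesis applies to all the others. This loses one more factor `1 - η` in
the density, and the short pieces account for the new term in the second bound
(`order_induction`).
-/

open MeasureTheory Set Filter Topology
open scoped ENNReal
open scoped Classical

noncomputable section

/-! ## The nearly finite Chacon transformation: symbolic model -/

/-- The alphabet `{*} ∪ ℕ` is modelled by `Option ℕ`, `none` playing the role of `*`. -/
instance optionNatTop : TopologicalSpace (Option ℕ) := ⊥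

/-- The data of the two sequences `(n_ℓ)` and `(ℓ_k)` used in the construction of the
nearly finite Chacon transformation, together with the growth conditions imposed on them. -/
structure NFCseq where
  nseq : ℕ → ℕ
  lseq : ℕ → ℕ
  nseq_zero : nseq 0 = 0
  lseq_zero : lseq 0 = 1
  lseq_strictMono : StrictMono lseq
  nseq_growth : ∀ ℓ : ℕ, 1 ≤ ℓ → nseq (ℓ - 1) + 2 * ℓ < nseq ℓ
  lseq_growth : ∀ k : ℕ, (2 : ℝ) ≤ (1 + ((7 : ℝ) ^ k)⁻¹) ^ (lseq (k + 1) - lseq k)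

namespace NFCseq

/-- `k(ℓ)`: the unique `k` with `ℓ_k ≤ ℓ < ℓ_{k+1}`. -/
def kOf (P : NFCseq) (ℓ : ℕ) : ℕ := sSup {k | P.lseq k ≤ ℓ}

/-- The heights `h_n` of the towers. -/
def hgt (P : NFCseq) : ℕ → ℕ
  | 0 => 1
  | n + 1 =>
    3 * P.hgt n +
      3 * (if hn : ∃ ℓ, 1 ≤ ℓ ∧ P.nseq ℓ = n then P.hgt (n - P.kOf (Nat.find hn)) else 0) + 1
termination_by n => n
decreasing_by all_goals omega

theorem hgt_pos (P : NFCseq) (n : ℕ) : 0 < P.hgt n := by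
  cases n with
  | zero => simp [hgt]
  | succ n => rw [hgt]; omega

/-- The number of spacers put above the first subcolumn at step `n+1`
(`h_{n-k(ℓ)}` if `n = n_ℓ`, and `0` otherwise). -/
def spa (P : NFCseq) (n : ℕ) : ℕ :=
  if hn : ∃ ℓ, 1 ≤ ℓ ∧ P.nseq ℓ = n then P.hgt (n - P.kOf (Nat.find hn)) else 0

/-- The map `p_n` sending the index of a level of tower `n+1` to the index of the level of
tower `n` containing it (`none` if that level lies outside tower `n`). -/
def pmap (P : NFCseq) (n j : ℕ) : Option ℕ :=
  if j < P.hgt n then some j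
  else if j < P.hgt n + P.spa n then none
  else if j < 2 * P.hgt n + P.spa n then some (j - (P.hgt n + P.spa n))
  else if j < 2 * P.hgt n + 2 * P.spa n + 1 then none
  else if j < 3 * P.hgt n + 2 * P.spa n + 1 then some (j - (2 * P.hgt n + 2 * P.spa n + 1))
  else none

/-- The defining property of points of the space `X`. -/
def Xspec (P : NFCseq) (x : ℕ → Option ℕ) : Prop :=
  (∀ n, x n = (x (n + 1)).bind (P.pmap n)) ∧ ∃ n, x n ≠ none

/-- The space `X` of the symbolic model, with its product (subspace) topology. -/
abbrev Xpt (P : NFCseq) : Type := {x : ℕ → Option ℕ // P.Xspec x}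

instance (P : NFCseq) : MeasurableSpace P.Xpt := borel _

/-- `L_n^j`, the `j`-th level of tower `n`. -/
def level (P : NFCseq) (n j : ℕ) : Set P.Xpt := {x | x.1 n = some j}

/-- `C_n`, the union of all levels of tower `n`. -/
def tower (P : NFCseq) (n : ℕ) : Set P.Xpt := {x | x.1 n ≠ none}

theorem pmap_zero (P : NFCseq) (n : ℕ) : P.pmap n 0 = some 0 := by
  unfold pmap
  simp [P.hgt_pos n]

/-- The point `𝟎 = (0,0,…)`. -/
def zeroPt (P : NFCseq) : P.Xpt :=
  ⟨fun _ => some 0, fun n => by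
    show some 0 = (some 0).bind (P.pmap n)
    simp [P.pmap_zero n], 0, by simp⟩

/-- `t_n(x) ∈ {1,2,3}`: the subcolumn of tower `n` to which `x` belongs
(junk value `0` if `x` is not in tower `n+1`). -/
def tcol (P : NFCseq) (n : ℕ) (x : P.Xpt) : ℕ :=
  match x.1 (n + 1) with
  | none => 0
  | some j =>
    if j < P.hgt n + P.spa n then 1
    else if j < 2 * P.hgt n + 2 * P.spa n + 1 then 2
    else 3

/-- The index (from `0` to `3^(m-n) - 1`, ordered from bottom to top of tower `m`) of the
occurrence of tower `n` inside tower `m` to which `x` belongs. -/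
def occIdx (P : NFCseq) (n m : ℕ) (x : P.Xpt) : ℕ :=
  ∑ r ∈ Finset.Ico n m, (P.tcol r x - 1) * 3 ^ (r - n)

/-- `x` belongs to one of the first hundred occurrences of tower `n` inside tower `m`. -/
def inFirstHundred (P : NFCseq) (n m : ℕ) (x : P.Xpt) : Prop := P.occIdx n m x < 100

/-- `x` belongs to one of the last hundred occurrences of tower `n` inside tower `m`. -/
def inLastHundred (P : NFCseq) (n m : ℕ) (x : P.Xpt) : Prop :=
  3 ^ (m - n) ≤ P.occIdx n m x + 100

end NFCseq

/-- The nearly finite Chacon transformation `T` together with its invariant measure `μ`. -/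
structure NFC extends NFCseq where
  T : toNFCseq.Xpt → toNFCseq.Xpt
  μ : Measure toNFCseq.Xpt
  T_inj : Function.Injective T
  T_range : Set.range T = {toNFCseq.zeroPt}ᶜ
  T_up : ∀ x : toNFCseq.Xpt, ∃ N : ℕ, ∀ n, N ≤ n →
    ∃ j : ℕ, x.1 n = some j ∧ (T x).1 n = some (j + 1)
  T_meas : Measurable T
  μ_level : ∀ n j : ℕ, j < toNFCseq.hgt n →
    μ (toNFCseq.level n j) = (3 : ℝ≥0∞)⁻¹ ^ n
  μ_pres : MeasurePreserving T μ μ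
  μ_sfin : SigmaFinite μ

namespace NFC

/-- `X^d`. -/
abbrev Xd (S : NFC) (d : ℕ) : Type := Fin d → S.toNFCseq.Xpt

/-- The Cartesian power `T^{×d}`. -/
def Td (S : NFC) (d : ℕ) : S.Xd d → S.Xd d := fun y i => S.T (y i)

/-- `C_n^d`. -/
def towerD (S : NFC) (d n : ℕ) : Set (S.Xd d) := {y | ∀ i, y i ∈ S.toNFCseq.tower n}

/-- `B` is an `n`-box. -/
def IsNBox (S : NFC) (d n : ℕ) (B : Set (S.Xd d)) : Prop :=
  ∃ v : Fin d → ℕ, (∀ i, v i < S.toNFCseq.hgt n) ∧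
    B = {y : S.Xd d | ∀ i, y i ∈ S.toNFCseq.level n (v i)}

/-- A measure on `X^d` is Radon iff it is finite on each `C_n^d`. -/
def IsRadon (S : NFC) (d : ℕ) (σ : Measure (S.Xd d)) : Prop :=
  ∀ n, σ (S.towerD d n) < ⊤

/-- `σ` is `T^{×d}`-invariant. -/
def InvariantD (S : NFC) (d : ℕ) (σ : Measure (S.Xd d)) : Prop :=
  ∀ A : Set (S.Xd d), MeasurableSet A → σ ((S.Td d) ⁻¹' A) = σ A

/-- `T^{-e} A`, the preimage of `A` under `T^e` for `e ∈ ℤ` (image for negative `e`). -/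
def preT (S : NFC) : ℤ → Set S.toNFCseq.Xpt → Set S.toNFCseq.Xpt
  | Int.ofNat k, A => S.T^[k] ⁻¹' A
  | Int.negSucc k, A => S.T^[k + 1] '' A

/-- `σ` is a graph measure arising from powers of `T` on `X^ι`:
`σ(∏ᵢ Aᵢ) = α · μ(⋂ᵢ T^{-eᵢ} Aᵢ)`. -/
def IsGraphMeasure (S : NFC) {ι : Type} (σ : Measure (ι → S.toNFCseq.Xpt)) : Prop :=
  ∃ α : ℝ≥0∞, 0 < α ∧ α ≠ ⊤ ∧ ∃ e : ι → ℤ,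
    ∀ A : ι → Set S.toNFCseq.Xpt, (∀ i, MeasurableSet (A i)) →
      σ (Set.univ.pi A) = α * S.μ (⋂ i, S.preT (e i) (A i))

/-- `σ = σ^{D_1} ⊗ ⋯ ⊗ σ^{D_r}` for a partition `D_1, …, D_r` of `{1,…,d}` where each
`σ^{D_j}` is a graph measure on `X^{D_j}` arising from powers of `T`. -/
def IsProductOfGraphMeasures (S : NFC) (d : ℕ) (σ : Measure (S.Xd d)) : Prop :=
  ∃ (r : ℕ) (D : Fin r → Finset (Fin d)),
    (∀ j, (D j).Nonempty) ∧
    (∀ j j', j ≠ j' → Disjoint (D j) (D j')) ∧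
    (∀ i : Fin d, ∃ j, i ∈ D j) ∧
    ∃ σD : ∀ j : Fin r, Measure ({i // i ∈ D j} → S.toNFCseq.Xpt),
      (∀ j, S.IsGraphMeasure (σD j)) ∧
      ∀ A : Fin d → Set S.toNFCseq.Xpt, (∀ i, MeasurableSet (A i)) →
        σ (Set.univ.pi A) =
          ∏ j : Fin r, σD j (Set.univ.pi fun i : {i // i ∈ D j} => A i.1)

end NFC


/-- `(T)^j W` for `j ∈ ℤ`: forward images for `j ≥ 0`, preimages for `j < 0`. -/
def iterZ {α : Type*} (f : α → α) : ℤ → Set α → Set α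
  | Int.ofNat k, A => f^[k] '' A
  | Int.negSucc k, A => f^[k + 1] ⁻¹' A

namespace NFC

/-- `σ` is totally dissipative: there is a wandering set `W` whose `ℤ`-orbit covers
`X^d` up to a `σ`-null set. -/
def TotallyDissipative (S : NFC) (d : ℕ) (σ : Measure (S.Xd d)) : Prop :=
  ∃ W : Set (S.Xd d), MeasurableSet W ∧
    (∀ j j' : ℤ, j ≠ j' → Disjoint (iterZ (S.Td d) j W) (iterZ (S.Td d) j' W)) ∧
    σ (⋃ j : ℤ, iterZ (S.Td d) j W)ᶜ = 0

/-- The ring `𝓡` of finite unions of `n`-boxes. -/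
def BoxRing (S : NFC) (d : ℕ) : Set (Set (S.Xd d)) :=
  {B | ∃ n : ℕ, ∃ 𝔅 : Finset (Set (S.Xd d)), (∀ b ∈ 𝔅, S.IsNBox d n b) ∧ B = ⋃₀ ↑𝔅}

/-- Convergence of a sequence of Radon measures on `X^d`. -/
def RTendsto (S : NFC) (d : ℕ) (σk : ℕ → Measure (S.Xd d)) (σ : Measure (S.Xd d)) : Prop :=
  ∀ n : ℕ, 0 < σ (S.towerD d n) →
    (∀ᶠ k in atTop, 0 < σk k (S.towerD d n)) ∧
    ∀ B : Set (S.Xd d), S.IsNBox d n B →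
      Tendsto (fun k => σk k B / σk k (S.towerD d n)) atTop
        (𝓝 (σ B / σ (S.towerD d n)))

/-- The edge `∂C_n^d` of `C_n^d`. -/
def edgeD (S : NFC) (d n : ℕ) : Set (S.Xd d) :=
  {y | y ∈ S.towerD d n ∧ ∃ i, y i ∈ S.toNFCseq.level n 0 ∨
    y i ∈ S.toNFCseq.level n (S.toNFCseq.hgt n - 1)}

/-- `Ω_m`: the union of all `m`-boxes `L_m^{j_1} × ⋯ × L_m^{j_d}` with `j_i ≠ 0` for all `i`. -/
def OmegaD (S : NFC) (d m : ℕ) : Set (S.Xd d) :=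
  {y | ∀ i, ∃ j : ℕ, j ≠ 0 ∧ j < S.toNFCseq.hgt m ∧ y i ∈ S.toNFCseq.level m j}

/-- A twisting transformation on `X^d`: it applies `T` to the coordinates in a nonempty
proper subset `G_1 ⊆ {1,…,d}` and the identity to the others. -/
def IsTwist (S : NFC) (d : ℕ) (Sw : S.Xd d → S.Xd d) : Prop :=
  ∃ G : Fin d → Bool, (∃ i, G i = true) ∧ (∃ i, G i = false) ∧
    ∀ (y : S.Xd d) (i : Fin d), Sw y i = if G i then S.T (y i) else y i

/-- The empirical measure `γ_J = ∑_{j ∈ J} δ_{(T^{×d})^j x}` along a two-sided orbit `o`. -/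
def emp (S : NFC) (d : ℕ) (o : ℤ → S.Xd d) (J : Finset ℤ) : Measure (S.Xd d) :=
  ∑ j ∈ J, Measure.dirac (o j)

end NFC

/-- `J` is a (nonempty finite) interval of `ℤ`. -/
def IsIntervalZ (J : Finset ℤ) : Prop := ∃ a b : ℤ, a ≤ b ∧ J = Finset.Icc a b

namespace NFC

/-- `J` is an `n`-crossing for the orbit `o` of a point of `X^d`: a maximal interval on which
the orbit stays in `C_n^d` with all the `t_n(T^j x_i)` constant. -/
def IsCrossing (S : NFC) (d : ℕ) (o : ℤ → S.Xd d) (n : ℕ) (J : Finset ℤ) : Prop :=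
  IsIntervalZ J ∧
  (∀ j ∈ J, o j ∈ S.towerD d n) ∧
  (∀ i : Fin d, ∀ j ∈ J, ∀ j' ∈ J, S.toNFCseq.tcol n (o j i) = S.toNFCseq.tcol n (o j' i)) ∧
  ∀ J' : Finset ℤ, J ⊆ J' → IsIntervalZ J' →
    (∀ j ∈ J', o j ∈ S.towerD d n) →
    (∀ i : Fin d, ∀ j ∈ J', ∀ j' ∈ J', S.toNFCseq.tcol n (o j i) = S.toNFCseq.tcol n (o j' i)) →
    J' = J

/-- An `n`-crossing is synchronized if `t_n(T^j x_1) = ⋯ = t_n(T^j x_d)` on it. -/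
def IsSync (S : NFC) (d : ℕ) (o : ℤ → S.Xd d) (n : ℕ) (J : Finset ℤ) : Prop :=
  ∀ j ∈ J, ∀ i i' : Fin d, S.toNFCseq.tcol n (o j i) = S.toNFCseq.tcol n (o j i')

end NFC

/-- The interval `I_n` of length `h_n` centered at `0`. -/
def Imid (P : NFCseq) (n : ℕ) : Finset ℤ :=
  Finset.Icc (-((P.hgt n / 2 : ℕ) : ℤ)) (-((P.hgt n / 2 : ℕ) : ℤ) + P.hgt n - 1)

namespace NFC

/-- A substantial `n`-crossing: an `n`-crossing whose intersection with `I_n` has at least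
`η·h_n` elements. -/
def IsSubstantial (S : NFC) (d : ℕ) (o : ℤ → S.Xd d) (η : ℝ) (n : ℕ) (J : Finset ℤ) : Prop :=
  S.IsCrossing d o n J ∧ η * S.toNFCseq.hgt n ≤ ((J ∩ Imid S.toNFCseq n).card : ℝ)

/-- `x_i` climbs into tower `n` along the interval `I`. -/
def Climbs (S : NFC) (d : ℕ) (o : ℤ → S.Xd d) (i : Fin d) (n : ℕ) (I : Finset ℤ) : Prop :=
  (∀ j ∈ I, (o j) i ∈ S.toNFCseq.tower n) ∧
  ¬ ∃ j : ℤ, j ∈ I ∧ j + 1 ∈ I ∧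
      (o j) i ∈ S.toNFCseq.level n (S.toNFCseq.hgt n - 1) ∧
      (o (j + 1)) i ∈ S.toNFCseq.level n 0

end NFC

/-- The nearly finite Chacon system together with the conull set `X_∞` and the function
`x ↦ ℓ(x)` of Lemma 2.3. -/
structure NFCX extends NFC where
  Xinf : Set toNFCseq.Xpt
  ellx : toNFCseq.Xpt → ℕ
  Xinf_conull : μ Xinfᶜ = 0
  Xinf_spec : ∀ x ∈ Xinf, ∀ ℓ : ℕ, ellx x ≤ ℓ → ∀ n : ℕ,
    nseq (ℓ - 1) ≤ n → n + ℓ ≤ nseq ℓ →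
      x ∈ toNFCseq.tower n ∧ ¬ toNFCseq.inFirstHundred n (nseq ℓ) x ∧
        ¬ toNFCseq.inLastHundred n (nseq ℓ) x

namespace NFCX

/-- `o` is the two-sided orbit of a `σ`-typical point `x = o 0` (satisfying
conditions (1), (2) and (3) of Section 3.4 of the paper). -/
def IsTypicalOrbit (S : NFCX) (d : ℕ) (σ : Measure (S.toNFC.Xd d))
    (o : ℤ → S.toNFC.Xd d) : Prop :=
  (∀ j : ℤ, S.toNFC.Td d (o j) = o (j + 1)) ∧
  (∀ j : ℤ, ∀ n : ℕ, 0 < σ (S.toNFC.towerD d n) →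
    ∀ B : Set (S.toNFC.Xd d), S.toNFC.IsNBox d n B →
    ∀ a b : ℕ → ℤ, (∀ k, a k ≤ 0) → (∀ k, 0 ≤ b k) →
      Tendsto (fun k => b k - a k) atTop atTop →
      Tendsto (fun k =>
          (((Finset.Icc (a k) (b k)).filter (fun j' => o (j + j') ∈ B)).card : ℝ) /
            (((Finset.Icc (a k) (b k)).filter
              (fun j' => o (j + j') ∈ S.toNFC.towerD d n)).card : ℝ))
        atTop (𝓝 ((σ B).toReal / (σ (S.toNFC.towerD d n)).toReal))) ∧
  (∀ n : ℕ, ∀ B : Set (S.toNFC.Xd d), S.toNFC.IsNBox d n B → o 0 ∈ B → 0 < σ B) ∧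
  (∀ i : Fin d, (o 0) i ∈ S.Xinf)

end NFCX

/-! ## Subsets of `ℤ` of order `ℓ` inside an interval -/

/-- A piece of `F ∩ I`: a maximal interval included in `F ∩ I`. -/
def IsPieceZ (F : Set ℤ) (I : Finset ℤ) (J : Finset ℤ) : Prop :=
  IsIntervalZ J ∧ (↑J : Set ℤ) ⊆ F ∩ ↑I ∧
    ∀ J' : Finset ℤ, IsIntervalZ J' → (↑J' : Set ℤ) ⊆ F ∩ ↑I → J ⊆ J' → J' = J

/-- A hole of `F ∩ I`: a maximal interval included in `I \ F`. -/
def IsHoleZ (F : Set ℤ) (I : Finset ℤ) (J : Finset ℤ) : Prop :=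
  IsIntervalZ J ∧ (↑J : Set ℤ) ⊆ (↑I : Set ℤ) \ F ∧
    ∀ J' : Finset ℤ, IsIntervalZ J' → (↑J' : Set ℤ) ⊆ (↑I : Set ℤ) \ F → J ⊆ J' → J' = J

/-- Each hole of `F ∩ I` has size at most `s`. -/
def HolesSmall (F : Set ℤ) (I : Finset ℤ) (s : ℕ) : Prop :=
  ∀ H : Finset ℤ, IsHoleZ F I H → H.card ≤ s

/-- Two consecutive holes of `F ∩ I` are always separated by a piece of size at least `c`. -/
def HolesSeparated (F : Set ℤ) (I : Finset ℤ) (c : ℕ) : Prop :=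
  ∀ H₁ H₂ : Finset ℤ, IsHoleZ F I H₁ → IsHoleZ F I H₂ →
    (∀ a ∈ H₁, ∀ b ∈ H₂, a < b) →
    ∃ J : Finset ℤ, IsPieceZ F I J ∧ c ≤ J.card ∧ ∀ a ∈ H₁, ∀ b ∈ H₂, ∀ x ∈ J, a < x ∧ x < b

/-- `F` is of order `ℓ ≥ 1` inside the interval `I`, with respect to the sequences `c`, `s`. -/
def IsOrder (c s : ℕ → ℕ) : ℕ → Set ℤ → Finset ℤ → Prop
  | 0, _, _ => False
  | 1, F, I => HolesSmall F I (s 1) ∧ HolesSeparated F I (c 1)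
  | (ℓ + 2), F, I => ∃ F' : Set ℤ, F ⊆ F' ∧ HolesSmall F' I (s (ℓ + 2)) ∧
      HolesSeparated F' I (c (ℓ + 2)) ∧
      ∀ J : Finset ℤ, IsPieceZ F' I J → IsOrder c s (ℓ + 1) F J

/-- `p_1`: the smallest integer such that `3^{p_1} > 2d+1` and `p_1 > d`. -/
def pOne (d : ℕ) : ℕ := sInf {p : ℕ | 2 * d + 1 < 3 ^ p ∧ d < p}

/-- `p_2`: the smallest integer such that `1/3^{p_2} < η/3`. -/
def pTwo (η : ℝ) : ℕ := sInf {p : ℕ | ((3 : ℝ) ^ p)⁻¹ < η / 3}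



/-! ### Connected components of finite sets of integers -/

/-- `J` is a connected component of `S`: a nonempty interval in `S` neither of whose two
neighbouring integers belongs to `S`. -/
def IsComp (S J : Finset ℤ) : Prop :=
  ∃ a b : ℤ, a ≤ b ∧ J = Finset.Icc a b ∧ J ⊆ S ∧ a - 1 ∉ S ∧ b + 1 ∉ S

/-- The finite set of connected components of `S`. -/
def comps (S : Finset ℤ) : Finset (Finset ℤ) := S.powerset.filter (fun J => IsComp S J)

/-- The right end points of the connected components of `S`. -/
def rightEnds (S : Finset ℤ) : Finset ℤ := S.filter (fun x => x + 1 ∉ S)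

theorem mem_comps {S J : Finset ℤ} : J ∈ comps S ↔ IsComp S J := by
  unfold comps
  rw [Finset.mem_filter, Finset.mem_powerset]
  exact ⟨fun h => h.2, fun h => ⟨by obtain ⟨a, b, _, _, h, _⟩ := h; exact h, h⟩⟩

theorem isComp_iff_maximal (S J : Finset ℤ) :
    (IsIntervalZ J ∧ J ⊆ S ∧ ∀ J' : Finset ℤ, IsIntervalZ J' → J' ⊆ S → J ⊆ J' → J' = J) ↔
      IsComp S J := by
  constructor
  · rintro ⟨⟨a, b, hab, rfl⟩, hJ, hmax⟩
    refine ⟨a, b, hab, rfl, hJ, fun h => ?_, fun h => ?_⟩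
    · have h1 := hmax (Finset.Icc (a - 1) b) ⟨a - 1, b, by omega, rfl⟩ (fun x hx => by
        rw [Finset.mem_Icc] at hx
        rcases eq_or_ne x (a - 1) with rfl | hne
        · exact h
        · exact hJ (Finset.mem_Icc.2 ⟨by omega, hx.2⟩))
        (Finset.Icc_subset_Icc (by omega) le_rfl)
      have h2 : a - 1 ∈ Finset.Icc a b := h1 ▸ Finset.mem_Icc.2 ⟨le_rfl, by omega⟩
      rw [Finset.mem_Icc] at h2; omega
    · have h1 := hmax (Finset.Icc a (b + 1)) ⟨a, b + 1, by omega, rfl⟩ (fun x hx => by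
        rw [Finset.mem_Icc] at hx
        rcases eq_or_ne x (b + 1) with rfl | hne
        · exact h
        · exact hJ (Finset.mem_Icc.2 ⟨hx.1, by omega⟩))
        (Finset.Icc_subset_Icc le_rfl (by omega))
      have h2 : b + 1 ∈ Finset.Icc a b := h1 ▸ Finset.mem_Icc.2 ⟨by omega, le_rfl⟩
      rw [Finset.mem_Icc] at h2; omega
  · rintro ⟨a, b, hab, rfl, hJ, ha, hb⟩
    refine ⟨⟨a, b, hab, rfl⟩, hJ, ?_⟩
    rintro J' ⟨a', b', hab', rfl⟩ hJ' hsub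
    have h1 := hsub (Finset.mem_Icc.2 ⟨le_rfl, hab⟩)
    have h2 := hsub (Finset.mem_Icc.2 ⟨hab, le_rfl⟩)
    rw [Finset.mem_Icc] at h1 h2
    have h3 : ¬ a' < a := fun h => ha (hJ' (Finset.mem_Icc.2 ⟨by omega, by omega⟩))
    have h4 : ¬ b < b' := fun h => hb (hJ' (Finset.mem_Icc.2 ⟨by omega, by omega⟩))
    rw [show a' = a by omega, show b' = b by omega]

theorem isPieceZ_iff (F : Set ℤ) (I J : Finset ℤ) :
    IsPieceZ F I J ↔ IsComp (I.filter (fun x => x ∈ F)) J := by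
  rw [← isComp_iff_maximal]
  have h : ∀ K : Finset ℤ, ((↑K : Set ℤ) ⊆ F ∩ ↑I) ↔ K ⊆ I.filter (fun x => x ∈ F) := by
    intro K
    rw [← Finset.coe_subset, Finset.coe_filter]
    have : F ∩ ↑I = {x | x ∈ I ∧ x ∈ F} := by ext x; simp [and_comm]
    rw [this]
  simp only [IsPieceZ, h]

theorem isHoleZ_iff (F : Set ℤ) (I J : Finset ℤ) :
    IsHoleZ F I J ↔ IsComp (I.filter (fun x => x ∉ F)) J := by
  rw [← isComp_iff_maximal]
  have h : ∀ K : Finset ℤ, ((↑K : Set ℤ) ⊆ ↑I \ F) ↔ K ⊆ I.filter (fun x => x ∉ F) := by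
    intro K
    rw [← Finset.coe_subset, Finset.coe_filter]
    have : (↑I : Set ℤ) \ F = {x | x ∈ I ∧ x ∉ F} := by ext x; simp
    rw [this]
  simp only [IsHoleZ, h]

theorem exists_comp {S : Finset ℤ} {x : ℤ} (hx : x ∈ S) : ∃ J, IsComp S J ∧ x ∈ J := by
  obtain ⟨J, hJ, hmax⟩ := Finset.exists_max_image
    (S.powerset.filter (fun J => IsIntervalZ J ∧ x ∈ J)) Finset.card
    ⟨{x}, by
      rw [Finset.mem_filter, Finset.mem_powerset, Finset.singleton_subset_iff]
      exact ⟨hx, ⟨x, x, le_rfl, (Finset.Icc_self x).symm⟩, Finset.mem_singleton_self x⟩⟩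
  rw [Finset.mem_filter, Finset.mem_powerset] at hJ
  refine ⟨J, (isComp_iff_maximal S J).1 ⟨hJ.2.1, hJ.1, fun J' hi hs hsub => ?_⟩, hJ.2.2⟩
  have := hmax J' (by
    rw [Finset.mem_filter, Finset.mem_powerset]; exact ⟨hs, hi, hsub hJ.2.2⟩)
  exact (Finset.eq_of_subset_of_card_le hsub this).symm

theorem IsComp.subset_of_meets {S K : Finset ℤ} (hK : IsComp S K) {a b x : ℤ}
    (h : Finset.Icc a b ⊆ S) (hx : x ∈ Finset.Icc a b) (hxK : x ∈ K) : Finset.Icc a b ⊆ K := by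
  obtain ⟨u, v, huv, rfl, hs, hu, hv⟩ := hK
  rw [Finset.mem_Icc] at hx hxK
  have h3 : ¬ a < u := fun h' => hu (h (Finset.mem_Icc.2 ⟨by omega, by omega⟩))
  have h4 : ¬ v < b := fun h' => hv (h (Finset.mem_Icc.2 ⟨by omega, by omega⟩))
  exact Finset.Icc_subset_Icc (by omega) (by omega)

theorem IsComp.eq_of_meets {S K J : Finset ℤ} (hK : IsComp S K) (hJ : IsComp S J) {x : ℤ}
    (hxK : x ∈ K) (hxJ : x ∈ J) : K = J := by
  apply Finset.Subset.antisymm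
  · obtain ⟨u, v, huv, rfl, hs, hu, hv⟩ := hK
    exact hJ.subset_of_meets hs hxK hxJ
  · obtain ⟨u, v, huv, rfl, hs, hu, hv⟩ := hJ
    exact hK.subset_of_meets hs hxJ hxK

/-! ### Passing to subintervals -/

theorem HolesSmall.mono {F : Set ℤ} {I J : Finset ℤ} {s : ℕ} (hJI : J ⊆ I)
    (h : HolesSmall F I s) : HolesSmall F J s := by
  intro H hH
  rw [isHoleZ_iff] at hH
  obtain ⟨a, b, hab, rfl, hs, ha, hb⟩ := hH
  have hs' := hs.trans (Finset.filter_subset_filter (fun x => x ∉ F) hJI)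
  have ha' : a ∈ Finset.Icc a b := Finset.mem_Icc.2 ⟨le_rfl, hab⟩
  obtain ⟨K, hK, haK⟩ := exists_comp (hs' ha')
  exact (Finset.card_le_card (hK.subset_of_meets hs' ha' haK)).trans
    (h K ((isHoleZ_iff _ _ _).2 hK))

/-- Two holes in the subinterval `J` extend to two distinct holes in `I`; the piece separating
these in `I` lies inside `J`, where it is still a piece. -/
theorem HolesSeparated.mono {F : Set ℤ} {I J : Finset ℤ} {c : ℕ} (hJ : IsIntervalZ J)
    (hJI : J ⊆ I) (h : HolesSeparated F I c) : HolesSeparated F J c := by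
  intro H₁ H₂ hH₁ hH₂ hlt
  rw [isHoleZ_iff] at hH₁ hH₂
  obtain ⟨a₁, b₁, hab₁, rfl, hs₁, ha₁, hb₁⟩ := hH₁
  obtain ⟨a₂, b₂, hab₂, rfl, hs₂, ha₂, hb₂⟩ := hH₂
  obtain ⟨p, q, hpq, rfl⟩ := hJ
  have mb₁ : b₁ ∈ Finset.Icc a₁ b₁ := Finset.mem_Icc.2 ⟨hab₁, le_rfl⟩
  have ma₂ : a₂ ∈ Finset.Icc a₂ b₂ := Finset.mem_Icc.2 ⟨le_rfl, hab₂⟩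
  have hlt' := hlt _ mb₁ _ ma₂
  have hs₁' := hs₁.trans (Finset.filter_subset_filter (fun x => x ∉ F) hJI)
  have hs₂' := hs₂.trans (Finset.filter_subset_filter (fun x => x ∉ F) hJI)
  have hb₁J := (Finset.mem_filter.1 (hs₁ mb₁)).1
  have ha₂J := (Finset.mem_filter.1 (hs₂ ma₂)).1
  rw [Finset.mem_Icc] at hb₁J ha₂J
  have hF : b₁ + 1 ∈ F := by
    by_contra hF
    exact hb₁ (Finset.mem_filter.2 ⟨Finset.mem_Icc.2 ⟨by omega, by omega⟩, hF⟩)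
  have hnot : b₁ + 1 ∉ I.filter (fun x => x ∉ F) := fun h' => (Finset.mem_filter.1 h').2 hF
  obtain ⟨K₁, hK₁, hbK₁⟩ := exists_comp (hs₁' mb₁)
  obtain ⟨K₂, hK₂, haK₂⟩ := exists_comp (hs₂' ma₂)
  have sub₁ := hK₁.subset_of_meets hs₁' mb₁ hbK₁
  have sub₂ := hK₂.subset_of_meets hs₂' ma₂ haK₂
  have hKK : ∀ a ∈ K₁, ∀ b ∈ K₂, a < b := by
    obtain ⟨u, v, huv, rfl, hKs, hu, hv⟩ := hK₁
    obtain ⟨u', v', huv', rfl, hKs', hu', hv'⟩ := hK₂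
    intro a ha b hb
    have n1 : ¬ b₁ + 1 ∈ Finset.Icc u v := fun h' => hnot (hKs h')
    have n2 : ¬ b₁ + 1 ∈ Finset.Icc u' v' := fun h' => hnot (hKs' h')
    rw [Finset.mem_Icc] at *
    omega
  obtain ⟨P, hP, hPc, hPb⟩ := h K₁ K₂ ((isHoleZ_iff _ _ _).2 hK₁) ((isHoleZ_iff _ _ _).2 hK₂) hKK
  refine ⟨P, ?_, hPc, fun a ha b hb => hPb a (sub₁ ha) b (sub₂ hb)⟩
  rw [isPieceZ_iff] at hP ⊢
  obtain ⟨u, v, huv, rfl, hPs, hu, hv⟩ := hP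
  refine ⟨u, v, huv, rfl, fun x hx => ?_,
    fun h' => hu (Finset.filter_subset_filter _ hJI h'),
    fun h' => hv (Finset.filter_subset_filter _ hJI h')⟩
  have := hPb _ hbK₁ _ haK₂ x hx
  exact Finset.mem_filter.2 ⟨Finset.mem_Icc.2 ⟨by omega, by omega⟩,
    (Finset.mem_filter.1 (hPs hx)).2⟩

theorem IsOrder.mono {c s : ℕ → ℕ} : ∀ (n : ℕ) {F : Set ℤ} {I J : Finset ℤ}, IsIntervalZ J →
    J ⊆ I → IsOrder c s (n + 1) F I → IsOrder c s (n + 1) F J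
  | 0, F, I, J, hJ, hJI, h => by
    simp only [IsOrder] at h ⊢
    exact ⟨h.1.mono hJI, h.2.mono hJ hJI⟩
  | n + 1, F, I, J, hJ, hJI, h => by
    simp only [IsOrder] at h ⊢
    obtain ⟨F', hFF', h1, h2, h3⟩ := h
    refine ⟨F', hFF', h1.mono hJI, h2.mono hJ hJI, fun K hK => ?_⟩
    rw [isPieceZ_iff] at hK
    obtain ⟨u, v, huv, rfl, hKs, hu, hv⟩ := hK
    have hs' := hKs.trans (Finset.filter_subset_filter (fun x => x ∈ F') hJI)
    have mu : u ∈ Finset.Icc u v := Finset.mem_Icc.2 ⟨le_rfl, huv⟩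
    obtain ⟨L, hL, huL⟩ := exists_comp (hs' mu)
    exact IsOrder.mono n ⟨u, v, huv, rfl⟩ (hL.subset_of_meets hs' mu huL)
      (h3 L ((isPieceZ_iff _ _ _).2 hL))

/-! ### Counting holes and pieces -/

theorem exists_comp_of_mem_rightEnds {S : Finset ℤ} {e : ℤ} (he : e ∈ rightEnds S) :
    ∃ a, a ≤ e ∧ IsComp S (Finset.Icc a e) := by
  unfold rightEnds at he
  rw [Finset.mem_filter] at he
  obtain ⟨J, hJ, heJ⟩ := exists_comp he.1
  obtain ⟨a, b, hab, rfl, hs, ha, hb⟩ := id hJ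
  rw [Finset.mem_Icc] at heJ
  have : e = b := by
    by_contra hne
    exact he.2 (hs (Finset.mem_Icc.2 ⟨by omega, by omega⟩))
  subst this
  exact ⟨a, hab, hJ⟩

theorem card_le_mul_rightEnds {S : Finset ℤ} {s : ℕ} (h : ∀ J, IsComp S J → J.card ≤ s) :
    S.card ≤ s * (rightEnds S).card := by
  have hex : ∀ e ∈ rightEnds S, ∃ K : Finset ℤ, IsComp S K ∧ e ∈ K := fun e he =>
    exists_comp (Finset.mem_filter.1 he).1
  choose! K hK hmem using hex
  have hcov : S ⊆ (rightEnds S).biUnion K := by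
    intro x hx
    obtain ⟨J, hJ, hxJ⟩ := exists_comp hx
    obtain ⟨a, b, hab, rfl, hs, ha, hb⟩ := id hJ
    have mb : b ∈ Finset.Icc a b := Finset.mem_Icc.2 ⟨hab, le_rfl⟩
    have hbE : b ∈ rightEnds S := Finset.mem_filter.2 ⟨hs mb, hb⟩
    exact Finset.mem_biUnion.2 ⟨b, hbE, by
      rw [(hK b hbE).eq_of_meets hJ (hmem b hbE) mb]; exact hxJ⟩
  refine (Finset.card_le_card hcov).trans ((Finset.card_biUnion_le_card_mul _ _ s ?_).trans
    (mul_comm _ _).le)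
  exact fun e he => h _ (hK e he)

/-- The right end points of two holes are more than `c` apart, since a piece of size at least
`c` fits between them; so the length-`c` intervals starting at them are disjoint. -/
theorem rightEnds_card_mul_le {F : Set ℤ} {I : Finset ℤ} {c : ℕ} (hI : IsIntervalZ I)
    (h : HolesSeparated F I c) :
    (rightEnds (I.filter (fun x => x ∉ F))).card * c ≤ I.card + c := by
  obtain ⟨p, q, hpq, rfl⟩ := hI
  set S := (Finset.Icc p q).filter (fun x => x ∉ F) with hS
  have hsep : ∀ x ∈ rightEnds S, ∀ y ∈ rightEnds S, x < y → x + c ≤ y := by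
    intro x hx y hy hxy
    obtain ⟨a, hax, hA⟩ := exists_comp_of_mem_rightEnds hx
    obtain ⟨b, hby, hB⟩ := exists_comp_of_mem_rightEnds hy
    have hxb : x < b := by
      obtain ⟨_, _, _, _, hs, _, _⟩ := hB
      by_contra hcon
      exact (Finset.mem_filter.1 hx).2 (hs (Finset.mem_Icc.2 ⟨by omega, by omega⟩))
    obtain ⟨J, hJ, hJc, hJb⟩ := h _ _ ((isHoleZ_iff _ _ _).2 hA) ((isHoleZ_iff _ _ _).2 hB)
      (fun u hu v hv => by rw [Finset.mem_Icc] at hu hv; omega)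
    have hsub : J ⊆ Finset.Ioo x b := fun z hz => Finset.mem_Ioo.2
      (hJb x (Finset.mem_Icc.2 ⟨hax, le_rfl⟩) b (Finset.mem_Icc.2 ⟨le_rfl, hby⟩) z hz)
    have := Finset.card_le_card hsub
    rw [Int.card_Ioo] at this
    omega
  have hdisj : ((rightEnds S : Finset ℤ) : Set ℤ).PairwiseDisjoint
      (fun x => Finset.Ico x (x + c)) := by
    intro x hx y hy hxy
    refine Finset.disjoint_left.2 fun z hz hz' => ?_
    rw [Finset.mem_Ico] at hz hz'
    rcases lt_or_gt_of_ne hxy with hlt | hlt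
    · have := hsep x hx y hy hlt; omega
    · have := hsep y hy x hx hlt; omega
  have hcard := Finset.card_biUnion hdisj
  have hsub : (rightEnds S).biUnion (fun x => Finset.Ico x (x + c)) ⊆ Finset.Icc p (q + c) := by
    intro z hz
    obtain ⟨x, hx, hz⟩ := Finset.mem_biUnion.1 hz
    have := (Finset.mem_filter.1 (Finset.mem_filter.1 hx).1).1
    rw [Finset.mem_Icc] at *
    rw [Finset.mem_Ico] at hz
    omega
  have h2 := Finset.card_le_card hsub
  rw [hcard] at h2
  simp only [Int.card_Ico, add_sub_cancel_left, Int.toNat_natCast, Finset.sum_const,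
    smul_eq_mul, Int.card_Icc] at h2 ⊢
  omega

/-- Every component of `⋂ i, G i` in `I`, apart from one starting at the left end of `I`,
begins immediately after a hole of one of the sets `G i`. -/
theorem comps_card_le {d : ℕ} (G : Fin d → Set ℤ) {I : Finset ℤ} (hI : IsIntervalZ I) :
    (comps (I.filter (fun j => ∀ i, j ∈ G i))).card ≤
      1 + ∑ i, (rightEnds (I.filter (fun x => x ∉ G i))).card := by
  obtain ⟨p, q, hpq, rfl⟩ := hI
  set I := Finset.Icc p q with hIdef
  set S := I.filter (fun j => ∀ i, j ∈ G i) with hS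
  set T : Finset ℤ := insert (p - 1)
    (Finset.univ.biUnion (fun i => rightEnds (I.filter (fun x => x ∉ G i)))) with hT
  have hTc : T.card ≤ 1 + ∑ i, (rightEnds (I.filter (fun x => x ∉ G i))).card := by
    refine (Finset.card_insert_le _ _).trans ?_
    rw [add_comm]
    exact Nat.add_le_add_left Finset.card_biUnion_le 1
  refine le_trans ?_ hTc
  have hex : ∀ J ∈ comps S, ∃ t ∈ T, t + 1 ∈ J := by
    intro J hJ
    obtain ⟨a, b, hab, rfl, hs, ha, hb⟩ := mem_comps.1 hJ
    have ma : a ∈ Finset.Icc a b := Finset.mem_Icc.2 ⟨le_rfl, hab⟩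
    have haS := Finset.mem_filter.1 (hs ma)
    refine ⟨a - 1, ?_, by simpa using ma⟩
    by_cases hap : a = p
    · rw [hap]; exact Finset.mem_insert_self _ _
    · have haI : a - 1 ∈ I := by
        have := haS.1
        rw [hIdef, Finset.mem_Icc] at *; omega
      have : ¬ ∀ i, a - 1 ∈ G i := fun h => ha (Finset.mem_filter.2 ⟨haI, h⟩)
      push Not at this
      obtain ⟨i, hi⟩ := this
      refine Finset.mem_insert_of_mem (Finset.mem_biUnion.2 ⟨i, Finset.mem_univ _, ?_⟩)
      refine Finset.mem_filter.2 ⟨Finset.mem_filter.2 ⟨haI, hi⟩, fun h => ?_⟩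
      rw [sub_add_cancel] at h
      exact (Finset.mem_filter.1 h).2 (haS.2 i)
  choose! t htT htJ using hex
  refine Finset.card_le_card_of_injOn t htT fun J hJ K hK hJK => ?_
  exact (mem_comps.1 hJ).eq_of_meets (mem_comps.1 hK) (htJ J hJ) (hJK ▸ htJ K hK)

/-- The one-level estimate: if each `G i` has holes of size at most `s` that are `c`-separated
in an interval of length at least `η c`, then `⋂ i, G i` has density at least `1 - η`, and its
number of pieces is at most `d (1 + 2/η) |I| / c`. -/
theorem one_level {d : ℕ} (hd : 2 ≤ d) {η : ℝ} (hη0 : 0 < η) (hη1 : η < 1) {c s : ℕ}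
    (hc : 0 < c) (hcs : (s : ℝ) / (c : ℝ) < (1 / d) * (η / (η + 1)) * η)
    (G : Fin d → Set ℤ) {I : Finset ℤ} (hI : IsIntervalZ I)
    (h1 : ∀ i, HolesSmall (G i) I s) (h2 : ∀ i, HolesSeparated (G i) I c)
    (hsize : η * (c : ℝ) ≤ (I.card : ℝ)) :
    (1 - η) * (I.card : ℝ) ≤ ((I.filter (fun j => ∀ i, j ∈ G i)).card : ℝ) ∧
    ((comps (I.filter (fun j => ∀ i, j ∈ G i))).card : ℝ) * c ≤
      d * (1 + 2 / η) * (I.card : ℝ) := by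
  have hcR : (0 : ℝ) < c := by exact_mod_cast hc
  have hdR : (2 : ℝ) ≤ d := by exact_mod_cast hd
  set L : ℝ := (I.card : ℝ) with hL
  have hL0 : 0 ≤ L := Nat.cast_nonneg _
  set e : Fin d → ℕ := fun i => (rightEnds (I.filter (fun x => x ∉ G i))).card with he
  have hcL : (c : ℝ) ≤ L / η := by rw [le_div_iff₀ hη0]; linarith
  have hec : ∀ i, (e i : ℝ) * c ≤ L * (1 + 1 / η) := by
    intro i
    have h : ((e i * c : ℕ) : ℝ) ≤ ((I.card + c : ℕ) : ℝ) := by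
      exact_mod_cast rightEnds_card_mul_le hI (h2 i)
    push_cast at h
    have : L * (1 + 1 / η) = L + L / η := by ring
    linarith
  constructor
  · have hhole : ∀ i, ((I.filter (fun x => x ∉ G i)).card : ℝ) ≤ η / d * L := by
      intro i
      have h : (((I.filter (fun x => x ∉ G i)).card : ℕ) : ℝ) ≤ ((s * e i : ℕ) : ℝ) := by
        exact_mod_cast card_le_mul_rightEnds
          (fun J hJ => h1 i J ((isHoleZ_iff _ _ _).2 hJ))
      push_cast at h
      refine h.trans ?_
      calc (s : ℝ) * e i = (s / c) * (e i * c) := by field_simp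
        _ ≤ ((1 / d) * (η / (η + 1)) * η) * (L * (1 + 1 / η)) :=
            mul_le_mul hcs.le (hec i) (by positivity) (by positivity)
        _ = η / d * L := by field_simp
    have hcov : I.card ≤ (I.filter (fun j => ∀ i, j ∈ G i)).card +
        ∑ i, (I.filter (fun x => x ∉ G i)).card := by
      have hsub : I ⊆ I.filter (fun j => ∀ i, j ∈ G i) ∪
          Finset.univ.biUnion (fun i => I.filter (fun x => x ∉ G i)) := by
        intro x hx
        by_cases hxG : ∀ i, x ∈ G i
        · exact Finset.mem_union_left _ (Finset.mem_filter.2 ⟨hx, hxG⟩)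
        · push Not at hxG
          obtain ⟨i, hi⟩ := hxG
          exact Finset.mem_union_right _ (Finset.mem_biUnion.2
            ⟨i, Finset.mem_univ _, Finset.mem_filter.2 ⟨hx, hi⟩⟩)
      exact (Finset.card_le_card hsub).trans ((Finset.card_union_le _ _).trans
        (Nat.add_le_add_left Finset.card_biUnion_le _))
    have hcov' : L ≤ ((I.filter (fun j => ∀ i, j ∈ G i)).card : ℝ) +
        ∑ i, ((I.filter (fun x => x ∉ G i)).card : ℝ) := by
      rw [← Nat.cast_sum, ← Nat.cast_add]; exact Nat.cast_le.2 hcov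
    have hsum := Finset.sum_le_sum (fun i (_ : i ∈ Finset.univ) => hhole i)
    rw [Finset.sum_const, Finset.card_univ, Fintype.card_fin, nsmul_eq_mul] at hsum
    have : (d : ℝ) * (η / d * L) = η * L := by field_simp
    linarith
  · have h : ((comps (I.filter (fun j => ∀ i, j ∈ G i))).card : ℝ) ≤ 1 + ∑ i, (e i : ℝ) := by
      exact_mod_cast comps_card_le G hI
    have hsum := Finset.sum_le_sum (fun i (_ : i ∈ Finset.univ) => hec i)
    rw [Finset.sum_const, Finset.card_univ, Fintype.card_fin, nsmul_eq_mul,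
      ← Finset.sum_mul] at hsum
    have hLη : 0 ≤ L / η := by positivity
    calc ((comps (I.filter (fun j => ∀ i, j ∈ G i))).card : ℝ) * c
        ≤ (1 + ∑ i, (e i : ℝ)) * c := mul_le_mul_of_nonneg_right h hcR.le
      _ ≤ L / η + d * (L * (1 + 1 / η)) := by linarith
      _ ≤ d * (L / η) + d * (L * (1 + 1 / η)) := by nlinarith
      _ = d * (1 + 2 / η) * L := by ring

/-! ### Induction on the order -/

/-- The points of `⋂ i, F i` in `I` lying in a piece of size at most `cc`. -/
def shortPart {d : ℕ} (F : Fin d → Set ℤ) (I : Finset ℤ) (cc : ℕ) : Finset ℤ :=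
  I.filter (fun j => (∀ i, j ∈ F i) ∧
    ∃ J : Finset ℤ, IsPieceZ (⋂ i, F i) I J ∧ j ∈ J ∧ J.card ≤ cc)

theorem shortPart_card_le {d : ℕ} (F : Fin d → Set ℤ) (I : Finset ℤ) (cc : ℕ) :
    (shortPart F I cc).card ≤ (comps (I.filter (fun j => ∀ i, j ∈ F i))).card * cc := by
  have hsub : shortPart F I cc ⊆ ((comps (I.filter (fun j => ∀ i, j ∈ F i))).filter
      (fun J => J.card ≤ cc)).biUnion id := by
    intro x hx
    obtain ⟨-, -, J, hJ, hxJ, hJc⟩ := Finset.mem_filter.1 hx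
    rw [isPieceZ_iff] at hJ
    simp only [Set.mem_iInter] at hJ
    exact Finset.mem_biUnion.2 ⟨J, Finset.mem_filter.2 ⟨mem_comps.2 hJ, hJc⟩, hxJ⟩
  refine (Finset.card_le_card hsub).trans ((Finset.card_biUnion_le_card_mul _ _ cc ?_).trans ?_)
  · exact fun J hJ => (Finset.mem_filter.1 hJ).2
  · exact Nat.mul_le_mul_right _ (Finset.card_filter_le _ _)

/-- A piece of `⋂ i, F i` in `I` lies in a single component of any larger set `⋂ i, G i`, and
is a piece there. -/
theorem shortPart_subset {d : ℕ} {F G : Fin d → Set ℤ} (hFG : ∀ i, F i ⊆ G i) (I : Finset ℤ)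
    (cc : ℕ) : shortPart F I cc ⊆
      (comps (I.filter (fun j => ∀ i, j ∈ G i))).biUnion (fun J => shortPart F J cc) := by
  intro x hx
  obtain ⟨hxI, hxF, P, hP, hxP, hPc⟩ := Finset.mem_filter.1 hx
  have hxS : x ∈ I.filter (fun j => ∀ i, j ∈ G i) :=
    Finset.mem_filter.2 ⟨hxI, fun i => hFG i (hxF i)⟩
  obtain ⟨J, hJ, hxJ⟩ := exists_comp hxS
  refine Finset.mem_biUnion.2 ⟨J, mem_comps.2 hJ, Finset.mem_filter.2
    ⟨hxJ, hxF, P, ?_, hxP, hPc⟩⟩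
  rw [isPieceZ_iff] at hP ⊢
  simp only [Set.mem_iInter] at hP ⊢
  have hJI : J ⊆ I := by
    obtain ⟨_, _, _, _, hs, _, _⟩ := hJ
    exact hs.trans (Finset.filter_subset _ _)
  obtain ⟨u, v, huv, rfl, hs, hu, hv⟩ := hP
  have hsG : Finset.Icc u v ⊆ I.filter (fun j => ∀ i, j ∈ G i) := fun y hy =>
    Finset.mem_filter.2 ⟨(Finset.mem_filter.1 (hs hy)).1,
      fun i => hFG i ((Finset.mem_filter.1 (hs hy)).2 i)⟩
  have hPJ := hJ.subset_of_meets hsG hxP hxJ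
  exact ⟨u, v, huv, rfl,
    fun y hy => Finset.mem_filter.2 ⟨hPJ hy, (Finset.mem_filter.1 (hs hy)).2⟩,
    fun h => hu (Finset.filter_subset_filter _ hJI h),
    fun h => hv (Finset.filter_subset_filter _ hJI h)⟩

/-- Cutting `I` along the components of `⋂ i, G i` loses no points of the smaller set
`⋂ i, F i` and counts none twice. -/
theorem sum_comps_le {d : ℕ} (F G : Fin d → Set ℤ) (I : Finset ℤ) :
    ∑ J ∈ comps (I.filter (fun j => ∀ i, j ∈ G i)), (J.filter (fun j => ∀ i, j ∈ F i)).card ≤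
      (I.filter (fun j => ∀ i, j ∈ F i)).card := by
  rw [← Finset.card_biUnion]
  · refine Finset.card_le_card fun x hx => ?_
    obtain ⟨J, hJ, hx⟩ := Finset.mem_biUnion.1 hx
    obtain ⟨_, _, _, _, hs, _, _⟩ := mem_comps.1 hJ
    have hx := Finset.mem_filter.1 hx
    exact Finset.mem_filter.2 ⟨(Finset.mem_filter.1 (hs hx.1)).1, hx.2⟩
  · intro J hJ K hK hne
    refine Finset.disjoint_left.2 fun x hx hxK => hne ?_
    exact (mem_comps.1 hJ).eq_of_meets (mem_comps.1 hK) (Finset.mem_filter.1 hx).1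
      (Finset.mem_filter.1 hxK).1

/-- The bound of the second assertion, at order `n + 1`. -/
def shortBound (η K₁ : ℝ) (c : ℕ → ℕ) (cc n : ℕ) : ℝ :=
  K₁ * ((cc : ℝ) / (c 1 : ℝ) +
    ∑ m ∈ Finset.Ico 1 (n + 1), ((c m : ℝ) / (c (m + 1) : ℝ)) * ((1 - η) ^ (2 * (m + 1)))⁻¹)

theorem order_induction {d : ℕ} (hd : 2 ≤ d) {η : ℝ} (hη0 : 0 < η) (hη1 : η < 1)
    {c s : ℕ → ℕ} (hcpos : ∀ ℓ : ℕ, 1 ≤ ℓ → 0 < c ℓ)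
    {K₁ : ℝ} (hK₁ : K₁ = d * (1 + 2 / η) / (1 - η))
    (hcs : ∀ ℓ : ℕ, 1 ≤ ℓ → (s ℓ : ℝ) / (c ℓ : ℝ) < (1 / d) * (η / (η + 1)) * η)
    (hcc : ∀ ℓ : ℕ, 1 ≤ ℓ → (c ℓ : ℝ) / (c (ℓ + 1) : ℝ) < η / K₁)
    (F : Fin d → Set ℤ) (n : ℕ) : ∀ (I : Finset ℤ), IsIntervalZ I →
    (∀ i, IsOrder c s (n + 1) (F i) I) → η * (c (n + 1) : ℝ) ≤ (I.card : ℝ) →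
    (1 - η) ^ (2 * (n + 1)) * (I.card : ℝ) ≤ ((I.filter (fun j => ∀ i, j ∈ F i)).card : ℝ) ∧
    ∀ cc : ℕ, ((shortPart F I cc).card : ℝ) ≤
      shortBound η K₁ c cc n * ((I.filter (fun j => ∀ i, j ∈ F i)).card : ℝ) := by
  have hη' : 0 < 1 - η := by linarith
  have hdR : (2 : ℝ) ≤ d := by exact_mod_cast hd
  have hK0 : 0 < K₁ := by rw [hK₁]; positivity
  have hKη : (d : ℝ) * (1 + 2 / η) = K₁ * (1 - η) := by rw [hK₁]; field_simp
  induction n with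
  | zero =>
    intro I hI hord hsize
    simp only [zero_add, IsOrder] at hord hsize
    have hc1 : (0 : ℝ) < c 1 := by exact_mod_cast hcpos 1 le_rfl
    obtain ⟨hA, hB⟩ := one_level hd hη0 hη1 (hcpos 1 le_rfl) (hcs 1 le_rfl) F hI
      (fun i => (hord i).1) (fun i => (hord i).2) hsize
    constructor
    · refine le_trans ?_ hA
      have : (0 : ℝ) ≤ I.card := Nat.cast_nonneg _
      refine mul_le_mul_of_nonneg_right ?_ this
      exact pow_le_of_le_one hη'.le (by linarith) (by norm_num)
    · intro cc
      have h : ((shortPart F I cc).card : ℝ) ≤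
          ((comps (I.filter (fun j => ∀ i, j ∈ F i))).card : ℝ) * cc := by
        exact_mod_cast shortPart_card_le F I cc
      rw [hKη] at hB
      simp only [shortBound, zero_add, Finset.Ico_self, Finset.sum_empty, add_zero]
      set N : ℝ := ((comps (I.filter (fun j => ∀ i, j ∈ F i))).card : ℝ)
      set f : ℝ := ((I.filter (fun j => ∀ i, j ∈ F i)).card : ℝ)
      calc ((shortPart F I cc).card : ℝ) ≤ N * cc := h
        _ = (N * c 1) * (cc / c 1) := by field_simp
        _ ≤ (K₁ * f) * (cc / c 1) := by
            refine mul_le_mul_of_nonneg_right ?_ (by positivity)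
            calc N * c 1 ≤ K₁ * (1 - η) * I.card := hB
              _ = K₁ * ((1 - η) * I.card) := by ring
              _ ≤ K₁ * f := mul_le_mul_of_nonneg_left hA hK0.le
        _ = K₁ * (cc / c 1) * f := by ring
  | succ n ih =>
    intro I hI hord hsize
    have hord' := hord
    simp only [IsOrder] at hord'
    choose G hFG h1 h2 h3 using hord'
    have hcn : (0 : ℝ) < c (n + 1) := by exact_mod_cast hcpos (n + 1) (by omega)
    have hcn2 : (0 : ℝ) < c (n + 2) := by exact_mod_cast hcpos (n + 2) (by omega)
    obtain ⟨hA, hB⟩ := one_level hd hη0 hη1 (hcpos (n + 2) (by omega)) (hcs (n + 2) (by omega))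
      G hI h1 h2 hsize
    rw [hKη] at hB
    set S := I.filter (fun j => ∀ i, j ∈ G i) with hS
    set f : Finset ℤ → ℝ := fun J => ((J.filter (fun j => ∀ i, j ∈ F i)).card : ℝ) with hf
    have hf0 : ∀ J, 0 ≤ f J := fun J => Nat.cast_nonneg _
    set r : ℝ := (c (n + 1) : ℝ) / (c (n + 2) : ℝ) with hr
    have hr0 : 0 < r := by positivity
    have hrK : r * K₁ ≤ η := by
      have := hcc (n + 1) (by omega)
      rw [lt_div_iff₀ hK0] at this
      exact this.le
    set L : ℝ := (I.card : ℝ) with hL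
    have hL0 : 0 ≤ L := Nat.cast_nonneg _
    have hrc : r * c (n + 2) = c (n + 1) := div_mul_cancel₀ _ hcn2.ne'
    clear_value L r
    -- The components too short for the induction hypothesis have small total length.
    set big := (comps S).filter (fun J => η * (c (n + 1) : ℝ) ≤ (J.card : ℝ)) with hbig
    set small := (comps S).filter (fun J => ¬ η * (c (n + 1) : ℝ) ≤ (J.card : ℝ)) with hsmall
    have hsplit : ∀ g : Finset ℤ → ℝ, ∑ J ∈ big, g J + ∑ J ∈ small, g J = ∑ J ∈ comps S, g J :=
      fun g => Finset.sum_filter_add_sum_filter_not _ _ _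
    have hsmallsum : ∑ J ∈ small, (J.card : ℝ) ≤ η * (1 - η) * (r * K₁) * L := by
      calc ∑ J ∈ small, (J.card : ℝ) ≤ ∑ J ∈ small, η * (c (n + 1) : ℝ) :=
            Finset.sum_le_sum fun J hJ => (not_le.1 (Finset.mem_filter.1 hJ).2).le
        _ = (small.card : ℝ) * (η * (c (n + 1) : ℝ)) := by rw [Finset.sum_const, nsmul_eq_mul]
        _ ≤ ((comps S).card : ℝ) * (η * (c (n + 1) : ℝ)) := by
            refine mul_le_mul_of_nonneg_right ?_ (by positivity)
            exact Nat.cast_le.2 (Finset.card_filter_le _ _)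
        _ = ((comps S).card * c (n + 2)) * (η * r) := by rw [← hrc]; ring
        _ ≤ (K₁ * (1 - η) * L) * (η * r) := mul_le_mul_of_nonneg_right hB (by positivity)
        _ = η * (1 - η) * (r * K₁) * L := by ring
    have hbigord : ∀ J ∈ big, (1 - η) ^ (2 * (n + 1)) * (J.card : ℝ) ≤ f J ∧
        ∀ cc : ℕ, ((shortPart F J cc).card : ℝ) ≤ shortBound η K₁ c cc n * f J := by
      intro J hJ
      obtain ⟨hJS, hJc⟩ := Finset.mem_filter.1 hJ
      obtain ⟨a, b, hab, rfl, hs, ha, hb⟩ := mem_comps.1 hJS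
      refine ih _ ⟨a, b, hab, rfl⟩ (fun i => ?_) hJc
      have hs' : Finset.Icc a b ⊆ I.filter (fun x => x ∈ G i) := fun x hx =>
        Finset.mem_filter.2 ⟨(Finset.mem_filter.1 (hs hx)).1, (Finset.mem_filter.1 (hs hx)).2 i⟩
      have ma : a ∈ Finset.Icc a b := Finset.mem_Icc.2 ⟨le_rfl, hab⟩
      obtain ⟨K, hK, haK⟩ := exists_comp (hs' ma)
      exact IsOrder.mono n ⟨a, b, hab, rfl⟩ (hK.subset_of_meets hs' ma haK)
        (h3 i K ((isPieceZ_iff _ _ _).2 hK))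
    have hScard : (S.card : ℝ) ≤ ∑ J ∈ comps S, (J.card : ℝ) := by
      have hsub : S ⊆ (comps S).biUnion id := fun x hx => by
        obtain ⟨J, hJ, hxJ⟩ := exists_comp hx
        exact Finset.mem_biUnion.2 ⟨J, mem_comps.2 hJ, hxJ⟩
      rw [← Nat.cast_sum]
      exact Nat.cast_le.2 ((Finset.card_le_card hsub).trans Finset.card_biUnion_le)
    have hfsum : ∑ J ∈ comps S, f J ≤ f I := by
      rw [hf, ← Nat.cast_sum]
      exact Nat.cast_le.2 (sum_comps_le F G I)
    have hfbig : ∑ J ∈ big, f J ≤ f I := by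
      refine le_trans ?_ hfsum
      exact Finset.sum_le_sum_of_subset_of_nonneg (Finset.filter_subset _ _)
        fun J _ _ => hf0 J
    have hbigsum : (1 - η) ^ 2 * L ≤ ∑ J ∈ big, (J.card : ℝ) := by
      have h4 := hsplit (fun J => (J.card : ℝ))
      have h5 : η * (1 - η) * (r * K₁) * L ≤ η * (1 - η) * η * L := by gcongr
      have h6 : 0 ≤ (1 - η) * (η - η ^ 2) * L := by
        have : 0 ≤ η - η ^ 2 := by nlinarith
        positivity
      nlinarith
    have hdens : (1 - η) ^ (2 * (n + 1 + 1)) * L ≤ f I := by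
      calc (1 - η) ^ (2 * (n + 1 + 1)) * L
          = (1 - η) ^ (2 * (n + 1)) * ((1 - η) ^ 2 * L) := by ring
        _ ≤ (1 - η) ^ (2 * (n + 1)) * ∑ J ∈ big, (J.card : ℝ) := by gcongr
        _ = ∑ J ∈ big, (1 - η) ^ (2 * (n + 1)) * (J.card : ℝ) := Finset.mul_sum _ _ _
        _ ≤ ∑ J ∈ big, f J := Finset.sum_le_sum fun J hJ => (hbigord J hJ).1
        _ ≤ f I := hfbig
    refine ⟨hdens, fun cc => ?_⟩
    have hb0 : 0 ≤ shortBound η K₁ c cc n := by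
      unfold shortBound
      have : 0 ≤ ∑ m ∈ Finset.Ico 1 (n + 1),
          ((c m : ℝ) / (c (m + 1) : ℝ)) * ((1 - η) ^ (2 * (m + 1)))⁻¹ :=
        Finset.sum_nonneg fun m _ => by positivity
      positivity
    have hcover : ((shortPart F I cc).card : ℝ) ≤
        ∑ J ∈ comps S, ((shortPart F J cc).card : ℝ) := by
      rw [← Nat.cast_sum]
      exact Nat.cast_le.2 ((Finset.card_le_card (shortPart_subset hFG I cc)).trans
        Finset.card_biUnion_le)
    have hbigbad : ∑ J ∈ big, ((shortPart F J cc).card : ℝ) ≤ shortBound η K₁ c cc n * f I := by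
      calc ∑ J ∈ big, ((shortPart F J cc).card : ℝ)
          ≤ ∑ J ∈ big, shortBound η K₁ c cc n * f J :=
            Finset.sum_le_sum fun J hJ => (hbigord J hJ).2 cc
        _ = shortBound η K₁ c cc n * ∑ J ∈ big, f J := (Finset.mul_sum _ _ _).symm
        _ ≤ _ := mul_le_mul_of_nonneg_left hfbig hb0
    have hsmallbad : ∑ J ∈ small, ((shortPart F J cc).card : ℝ) ≤
        K₁ * (r * ((1 - η) ^ (2 * (n + 1 + 1)))⁻¹) * f I := by
      calc ∑ J ∈ small, ((shortPart F J cc).card : ℝ) ≤ ∑ J ∈ small, (J.card : ℝ) := by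
            refine Finset.sum_le_sum fun J _ => ?_
            exact Nat.cast_le.2 (Finset.card_filter_le _ _)
        _ ≤ η * (1 - η) * (r * K₁) * L := hsmallsum
        _ ≤ 1 * (r * K₁) * L := by
            have : η * (1 - η) ≤ 1 := by nlinarith
            gcongr
        _ = K₁ * (r * ((1 - η) ^ (2 * (n + 1 + 1)))⁻¹) * ((1 - η) ^ (2 * (n + 1 + 1)) * L) := by
            field_simp
        _ ≤ _ := mul_le_mul_of_nonneg_left hdens (by positivity)
    have hstep : shortBound η K₁ c cc (n + 1) =
        shortBound η K₁ c cc n + K₁ * (r * ((1 - η) ^ (2 * (n + 1 + 1)))⁻¹) := by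
      unfold shortBound
      rw [Finset.sum_Ico_succ_top (by omega : 1 ≤ n + 1), hr]
      ring
    have h7 := hsplit (fun J => ((shortPart F J cc).card : ℝ))
    rw [hstep, add_mul]
    linarith

/-- If each `F_i` is of order `ℓ` inside the interval `I` and
`|I| ≥ η c_ℓ`, then `F = ⋂ F_i` has density at least `(1−η)^{2ℓ}` in `I`, and for
`1 ≤ c ≤ c_1` the proportion of points of `F ∩ I` lying in pieces of size `≤ c` is at most
`K₁ (c/c₁ + (c₁/c₂)(1−η)⁻⁴ + ⋯ + (c_{ℓ−1}/c_ℓ)(1−η)^{−2ℓ})`. -/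
theorem stmt14 (d : ℕ) (hd : 2 ≤ d) (η : ℝ) (hη0 : 0 < η) (hη1 : η < 1)
    (c s : ℕ → ℕ) (hcpos : ∀ ℓ : ℕ, 1 ≤ ℓ → 0 < c ℓ) (hspos : ∀ ℓ : ℕ, 1 ≤ ℓ → 0 < s ℓ)
    (K₁ : ℝ) (hK₁ : K₁ = d * (1 + 2 / η) / (1 - η))
    (hcs : ∀ ℓ : ℕ, 1 ≤ ℓ → (s ℓ : ℝ) / (c ℓ : ℝ) < (1 / d) * (η / (η + 1)) * η)
    (hcc : ∀ ℓ : ℕ, 1 ≤ ℓ → (c ℓ : ℝ) / (c (ℓ + 1) : ℝ) < η / K₁)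
    (F : Fin d → Set ℤ) (I : Finset ℤ) (hI : IsIntervalZ I)
    (ℓ : ℕ) (hℓ : 1 ≤ ℓ) (hord : ∀ i, IsOrder c s ℓ (F i) I)
    (hIsize : η * (c ℓ : ℝ) ≤ (I.card : ℝ)) :
    (1 - η) ^ (2 * ℓ) ≤ ((I.filter (fun j => ∀ i, j ∈ F i)).card : ℝ) / (I.card : ℝ) ∧
    ∀ cc : ℕ, 1 ≤ cc → cc ≤ c 1 →
      ((I.filter (fun j => (∀ i, j ∈ F i) ∧
          ∃ J : Finset ℤ, IsPieceZ (⋂ i, F i) I J ∧ j ∈ J ∧ J.card ≤ cc)).card : ℝ) /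
        ((I.filter (fun j => ∀ i, j ∈ F i)).card : ℝ) ≤
      K₁ * ((cc : ℝ) / (c 1 : ℝ) +
        ∑ m ∈ Finset.Ico 1 ℓ, ((c m : ℝ) / (c (m + 1) : ℝ)) * ((1 - η) ^ (2 * (m + 1)))⁻¹) := by
  obtain ⟨n, rfl⟩ : ∃ n, ℓ = n + 1 := ⟨ℓ - 1, by omega⟩
  obtain ⟨h1, h2⟩ := order_induction hd hη0 hη1 hcpos hK₁ hcs hcc F n I hI hord hIsize
  have hc : (0 : ℝ) < c (n + 1) := by exact_mod_cast hcpos (n + 1) (by omega)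
  have hIpos : (0 : ℝ) < I.card := lt_of_lt_of_le (by positivity) hIsize
  have hη' : 0 < 1 - η := by linarith
  have hFpos : (0 : ℝ) < ((I.filter (fun j => ∀ i, j ∈ F i)).card : ℝ) :=
    lt_of_lt_of_le (by positivity) h1
  refine ⟨(le_div_iff₀ hIpos).2 h1, fun cc _ _ => (div_le_iff₀ hFpos).2 (h2 cc)⟩
end
end

section
/- Fix an integer ℓ̲ ≥ 1 and define c_ℓ := h_{n_{(ℓ̲+ℓ−1)}} and s_ℓ := h_{n_{(ℓ̲+ℓ−1)} − k(ℓ̲+ℓ−1)} + 1 for each ℓ ≥ 1. For i ∈ {1,…,d} and an interval I ⊂ ℤ, say that x_i climbs into tower n along I if T^j x_i ∈ C_n for every j ∈ I and there is no j with j, j+1 ∈ I, T^j x_i ∈ L_n^{h_n−1} and T^{j+1} x_i ∈ L_n^0. Then for every interval I ⊂ ℤ, every i ∈ {1,…,d} and every ℓ ≥ 1: if x_i climbs into tower n_{(ℓ̲+ℓ)} along I, then F_i := {j ∈ ℤ : T^j x_i ∈ C_{n_{ℓ̲}}} is of order ℓ inside I (with respect to the sequences (c_ℓ) and (s_ℓ)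 just defined). -/
/-!
Along `I` the point climbs through a single copy of tower `m = n_{L+1}`, where `L = lb + ℓ - 1`,
so its level in tower `m` increases by one at each step. Take for `F'` the set of times spent in
tower `n = n_L`, and let `s = h_{n - k(L)}` be the number of spacers added at step `n + 1`.

* Holes are small. By induction on `r ∈ (n, m]`, every window of `s + 2` consecutive levels of
  tower `r` meets tower `n` (`window_hits`): at step `n + 1` the gaps have size `s`, `s + 1`, `s`,
  and afterwards the gap of size `s` on top of a copy of tower `r` grows by at most the single
  spacer above the middle subcolumn.
* Holes are separated. A point entering tower `n` enters at level `0`, climbs to level `h_n - 1`,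
  and then leaves tower `n`, since every copy of tower `n = n_L` in tower `n + 1` has at least one
  spacer above it (`exits_top`). So a whole copy of tower `n` lies between two holes.

The same spacer shows that along a piece of `F' ∩ I` the point climbs into tower `n_L`, so the
theorem follows by induction on `ℓ`.
-/


open MeasureTheory Set Filter Topology
open scoped ENNReal
open scoped Classical

noncomputable section

/-! ### Heights and gaps in the tower structure -/

namespace NFCseq

variable (P : NFCseq)

theorem hgt_succ (n : ℕ) : P.hgt (n + 1) = 3 * P.hgt n + 3 * P.spa n + 1 := by
  rw [hgt]; rfl

theorem pmap_cases {n j a : ℕ} (h : P.pmap n j = some a) :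
    a < P.hgt n ∧ (j = a ∨ j = a + (P.hgt n + P.spa n) ∨
      j = a + (2 * P.hgt n + 2 * P.spa n + 1)) := by
  unfold pmap at h
  split_ifs at h <;> simp only [Option.some.injEq] at h <;> omega

theorem pmap_first {n a : ℕ} (ha : a < P.hgt n) : P.pmap n a = some a := by
  unfold pmap; simp [ha]

theorem pmap_second {n a : ℕ} (ha : a < P.hgt n) :
    P.pmap n (a + (P.hgt n + P.spa n)) = some a := by
  unfold pmap
  split_ifs <;> first | omega | (congr 1; omega)

theorem pmap_third {n a : ℕ} (ha : a < P.hgt n) :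
    P.pmap n (a + (2 * P.hgt n + 2 * P.spa n + 1)) = some a := by
  unfold pmap
  split_ifs <;> first | omega | (congr 1; omega)

theorem lt_hgt (x : P.Xpt) {n a : ℕ} (h : x.1 n = some a) : a < P.hgt n := by
  rw [x.2.1 n, Option.bind_eq_some_iff] at h
  obtain ⟨q, -, hq⟩ := h
  exact (P.pmap_cases hq).1

theorem nseq_strictMono : StrictMono P.nseq :=
  strictMono_nat_of_lt_succ fun n => by
    have := P.nseq_growth (n + 1) (by omega)
    simp only [Nat.add_sub_cancel] at this
    omega

theorem spa_nseq {L : ℕ} (hL : 1 ≤ L) :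
    P.spa (P.nseq L) = P.hgt (P.nseq L - P.kOf L) := by
  have hn : ∃ ℓ, 1 ≤ ℓ ∧ P.nseq ℓ = P.nseq L := ⟨L, hL, rfl⟩
  have hf : Nat.find hn = L := P.nseq_strictMono.injective (Nat.find_spec hn).2
  rw [spa, dif_pos hn, hf]

theorem spa_between {L r : ℕ} (h₁ : P.nseq L < r) (h₂ : r < P.nseq (L + 1)) : P.spa r = 0 := by
  rw [spa, dif_neg]
  rintro ⟨ℓ, -, rfl⟩
  rw [P.nseq_strictMono.lt_iff_lt] at h₁ h₂
  omega

/-- The composition `p_n ∘ ⋯ ∘ p_{n+d-1}`: the level of tower `n` containing a given level of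
tower `n + d` (`none` if that level lies outside tower `n`). -/
def down (n : ℕ) : ℕ → ℕ → Option ℕ
  | 0, q => some q
  | d + 1, q => (P.pmap (n + d) q).bind (down n d)

theorem eq_down (x : P.Xpt) (n d : ℕ) : x.1 n = (x.1 (n + d)).bind (P.down n d) := by
  induction d with
  | zero => cases h : x.1 n <;> simp [down]
  | succ d ih =>
    rw [ih, x.2.1 (n + d), Option.bind_assoc]
    rfl

/-- Every window of `spa n + 2` consecutive levels of tower `n + d + 1` meets tower `n`, provided
no spacers other than the Chacon ones are added at the intermediate steps. The other
conclusions, needed for windows overlapping two copies in the induction on `d`, say that the bottom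
level of tower `n + d + 1` and the level with exactly `spa n` levels above it lie in tower `n`. -/
theorem window_hits (n d : ℕ) (h0 : ∀ r, n < r → r < n + d + 1 → P.spa r = 0) :
    P.down n (d + 1) 0 ≠ none ∧
    P.spa n + 1 ≤ P.hgt (n + d + 1) ∧
    P.down n (d + 1) (P.hgt (n + d + 1) - 1 - P.spa n) ≠ none ∧
    ∀ q, q + P.spa n + 1 < P.hgt (n + d + 1) →
      ∃ t ≤ P.spa n + 1, P.down n (d + 1) (q + t) ≠ none := by
  induction d with
  | zero =>
    have hp := P.hgt_pos n
    have hs := P.hgt_succ n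
    have e (q : ℕ) : P.down n (0 + 1) q = P.pmap n q := by
      simp only [down, Nat.add_zero]
      cases P.pmap n q <;> rfl
    simp only [e, Nat.add_zero]
    have first (q a : ℕ) (ha : a < P.hgt n) (hq : q = a) : P.pmap n q ≠ none := by
      rw [hq, P.pmap_first ha]; simp
    have second (q a : ℕ) (ha : a < P.hgt n) (hq : q = a + (P.hgt n + P.spa n)) :
        P.pmap n q ≠ none := by
      rw [hq, P.pmap_second ha]; simp
    have third (q a : ℕ) (ha : a < P.hgt n) (hq : q = a + (2 * P.hgt n + 2 * P.spa n + 1)) :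
        P.pmap n q ≠ none := by
      rw [hq, P.pmap_third ha]; simp
    refine ⟨by simp [P.pmap_zero], by omega, third _ (P.hgt n - 1) (by omega) (by omega), ?_⟩
    intro q hq
    by_cases c1 : q < P.hgt n
    · exact ⟨0, by omega, first _ q c1 (by omega)⟩
    by_cases c2 : q < P.hgt n + P.spa n
    · exact ⟨P.hgt n + P.spa n - q, by omega, second _ 0 hp (by omega)⟩
    by_cases c3 : q < 2 * P.hgt n + P.spa n
    · exact ⟨0, by omega, second _ (q - (P.hgt n + P.spa n)) (by omega) (by omega)⟩
    by_cases c4 : q < 2 * P.hgt n + 2 * P.spa n + 1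
    · exact ⟨2 * P.hgt n + 2 * P.spa n + 1 - q, by omega, third _ 0 hp (by omega)⟩
    · exact ⟨0, by omega, third _ (q - (2 * P.hgt n + 2 * P.spa n + 1)) (by omega) (by omega)⟩
  | succ d ih =>
    obtain ⟨i1, i2, i3, i4⟩ := ih fun r h1 h2 => h0 r h1 (by omega)
    have hz := h0 (n + d + 1) (by omega) (by omega)
    have hp := P.hgt_pos (n + d + 1)
    have hs := P.hgt_succ (n + d + 1)
    have ea : n + (d + 1) + 1 = n + d + 1 + 1 := by omega
    rw [ea]
    rw [hz] at hs
    set H := P.hgt (n + d + 1) with hH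
    -- the three copies of tower `n + d + 1` start at levels `0`, `H` and `2 * H + 1`
    have key (b : ℕ) (hb : b = 0 ∨ b = H ∨ b = 2 * H + 1) (q a : ℕ) (ha : a < H)
        (hq : q = b + a) (hd : P.down n (d + 1) a ≠ none) :
        P.down n (d + 1 + 1) q ≠ none := by
      have : P.pmap (n + (d + 1)) q = some a := by
        rw [← Nat.add_assoc]
        rcases hb with hb | hb | hb
        · rw [← P.pmap_first ha]; congr 1; omega
        · rw [← P.pmap_second ha]; congr 1; omega
        · rw [← P.pmap_third ha]; congr 1; omega
      rw [down, this]
      exact hd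
    refine ⟨key 0 (by simp) 0 0 hp rfl i1, by omega,
      key (2 * H + 1) (by simp) _ (H - 1 - P.spa n) (by omega) (by omega) i3, ?_⟩
    intro q hq
    -- a window starting in the copy at level `b`
    have copy (b : ℕ) (hb : b = 0 ∨ b = H ∨ b = 2 * H + 1) (h1 : b ≤ q)
        (h2 : q + P.spa n + 1 < b + H) :
        ∃ t ≤ P.spa n + 1, P.down n (d + 1 + 1) (q + t) ≠ none := by
      obtain ⟨t, ht, h⟩ := i4 (q - b) (by omega)
      exact ⟨t, ht, key b hb _ _ (by omega) (by omega) h⟩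
    have start (b : ℕ) (hb : b = 0 ∨ b = H ∨ b = 2 * H + 1) (h1 : q ≤ b)
        (h2 : b ≤ q + P.spa n + 1) :
        ∃ t ≤ P.spa n + 1, P.down n (d + 1 + 1) (q + t) ≠ none :=
      ⟨b - q, by omega, key b hb _ 0 hp (by omega) i1⟩
    have last (b : ℕ) (hb : b = 0 ∨ b = H ∨ b = 2 * H + 1) (h1 : q = b + (H - 1 - P.spa n)) :
        ∃ t ≤ P.spa n + 1, P.down n (d + 1 + 1) (q + t) ≠ none :=
      ⟨0, by omega, key b hb _ (H - 1 - P.spa n) (by omega) (by omega) i3⟩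
    by_cases c1 : q + P.spa n + 1 < H
    · exact copy 0 (by simp) (by omega) (by omega)
    by_cases c3 : q ≤ H
    · exact start H (by simp) c3 (by omega)
    by_cases c4 : q + P.spa n + 1 < 2 * H
    · exact copy H (by simp) (by omega) (by omega)
    by_cases c5 : q + P.spa n + 1 = 2 * H
    · exact last H (by simp) (by omega)
    by_cases c6 : q ≤ 2 * H + 1
    · exact start (2 * H + 1) (by simp) c6 (by omega)
    · exact copy (2 * H + 1) (by simp) (by omega) (by omega)

end NFCseq

/-! ### Levels along an orbit -/

namespace NFC

variable (S : NFC)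

/-- The action of `T` on the level in a fixed tower: below the top it increases the level by one,
and every level other than the bottom one is reached in this way. -/
theorem step (x : S.toNFCseq.Xpt) (n : ℕ) :
    (∀ a, x.1 n = some a → a + 1 < S.hgt n → (S.T x).1 n = some (a + 1)) ∧
    (∀ a, (S.T x).1 n = some (a + 1) → x.1 n = some a) := by
  obtain ⟨N, hN⟩ := S.T_up x
  have big (n : ℕ) (hn : N ≤ n) :
      (∀ a, x.1 n = some a → a + 1 < S.hgt n → (S.T x).1 n = some (a + 1)) ∧
      (∀ a, (S.T x).1 n = some (a + 1) → x.1 n = some a) := by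
    obtain ⟨j, h1, h2⟩ := hN n hn
    rw [h1, h2]
    simp
  -- the property descends from tower `n + 1` to tower `n`
  have desc (d : ℕ) : ∀ n, N ≤ n + d →
      (∀ a, x.1 n = some a → a + 1 < S.hgt n → (S.T x).1 n = some (a + 1)) ∧
      (∀ a, (S.T x).1 n = some (a + 1) → x.1 n = some a) := by
    induction d with
    | zero => exact fun n hn => big n hn
    | succ d ih =>
      intro n hn
      obtain ⟨i1, i2⟩ := ih (n + 1) (by omega)
      have hs := S.toNFCseq.hgt_succ n
      constructor
      · intro a ha hlt
        rw [x.2.1 n, Option.bind_eq_some_iff] at ha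
        obtain ⟨q, hq, hqa⟩ := ha
        have hc := (S.toNFCseq.pmap_cases hqa).2
        rw [(S.T x).2.1 n, i1 q hq (by omega), Option.bind_some]
        rcases hc with hc | hc | hc
        · rw [← S.toNFCseq.pmap_first hlt]; congr 1; omega
        · rw [← S.toNFCseq.pmap_second hlt]; congr 1; omega
        · rw [← S.toNFCseq.pmap_third hlt]; congr 1; omega
      · intro a ha
        rw [(S.T x).2.1 n, Option.bind_eq_some_iff] at ha
        obtain ⟨q, hq, hqa⟩ := ha
        obtain ⟨hlt, hc⟩ := S.toNFCseq.pmap_cases hqa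
        have hlt' : a < S.hgt n := by omega
        obtain ⟨q', rfl⟩ : ∃ q', q = q' + 1 := ⟨q - 1, by omega⟩
        rw [x.2.1 n, i2 q' hq, Option.bind_some]
        rcases hc with hc | hc | hc
        · rw [← S.toNFCseq.pmap_first hlt']; congr 1; omega
        · rw [← S.toNFCseq.pmap_second hlt']; congr 1; omega
        · rw [← S.toNFCseq.pmap_third hlt']; congr 1; omega
  exact desc N n (by omega)

/-- When at least one spacer is put above each subcolumn, the top level of tower `n` is sent
outside tower `n`. -/
theorem exits_top (x : S.toNFCseq.Xpt) (n : ℕ) (hs : 0 < S.spa n)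
    (h : x.1 n = some (S.hgt n - 1)) : (S.T x).1 n = none := by
  rw [x.2.1 n, Option.bind_eq_some_iff] at h
  obtain ⟨q, hq, hqa⟩ := h
  have hc := (S.toNFCseq.pmap_cases hqa).2
  have hp := S.toNFCseq.hgt_pos n
  have hh := S.toNFCseq.hgt_succ n
  rw [(S.T x).2.1 n, (S.step x (n + 1)).1 q hq (by omega), Option.bind_some]
  cases hv : S.pmap n (q + 1) with
  | none => rfl
  | some b =>
    have := S.toNFCseq.pmap_cases hv
    omega

variable {S} {z : ℤ → S.toNFCseq.Xpt}

theorem run_up (hz : ∀ j, S.T (z j) = z (j + 1)) {n : ℕ} {b : ℤ}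
    (h0 : (z b).1 n = some 0) (t : ℕ) (ht : t < S.hgt n) : (z (b + t)).1 n = some t := by
  induction t with
  | zero => simpa using h0
  | succ t ih =>
    have := (S.step _ n).1 t (ih (by omega)) ht
    rw [hz] at this
    rwa [show b + ((t + 1 : ℕ) : ℤ) = b + t + 1 by push_cast; ring]

/-- A point entering tower `n` enters through the bottom level. -/
theorem enter_zero (hz : ∀ j, S.T (z j) = z (j + 1)) {n : ℕ} {b : ℤ}
    (h0 : (z b).1 n = none) (h1 : (z (b + 1)).1 n ≠ none) : (z (b + 1)).1 n = some 0 := by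
  obtain ⟨a, ha⟩ := Option.ne_none_iff_exists'.1 h1
  cases a with
  | zero => exact ha
  | succ a =>
    rw [← hz] at ha
    have := (S.step _ n).2 a ha
    simp [h0] at this

/-! ### Holes of the visits to a tower -/

/-- Holes of the visits to tower `n` are separated by complete copies of tower `n`, when at least
one spacer is put above each subcolumn. -/
theorem holesSeparated (hz : ∀ j, S.T (z j) = z (j + 1)) {n : ℕ} (hs : 0 < S.spa n)
    {I : Finset ℤ} (hI : IsIntervalZ I) :
    HolesSeparated {j | z j ∈ S.tower n} I (S.hgt n) := by
  rintro H₁ H₂ ⟨⟨a, b, hab, rfl⟩, hs₁, hm₁⟩ ⟨⟨c, e, hce, rfl⟩, hs₂, -⟩ hlt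
  obtain ⟨u, v, huv, rfl⟩ := hI
  have hbc : b < c := hlt b (by simp [hab]) c (by simp [hce])
  have hout₁ (j : ℤ) (h1 : a ≤ j) (h2 : j ≤ b) : (u ≤ j ∧ j ≤ v) ∧ (z j).1 n = none := by
    have := hs₁ (show j ∈ ((Finset.Icc a b : Finset ℤ) : Set ℤ) by simp [h1, h2])
    simpa [NFCseq.tower] using this
  have hc : (u ≤ c ∧ c ≤ v) ∧ (z c).1 n = none := by
    have := hs₂ (show c ∈ ((Finset.Icc c e : Finset ℤ) : Set ℤ) by simp [hce])
    simpa [NFCseq.tower] using this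
  have hb := hout₁ b hab le_rfl
  -- by maximality of the first hole, the point is in tower `n` right after it
  have hin : (z (b + 1)).1 n ≠ none := by
    intro hno
    have := hm₁ (Finset.Icc a (b + 1)) ⟨a, b + 1, by omega, rfl⟩ (by
      intro j hj
      simp only [Finset.coe_Icc, Set.mem_Icc] at hj
      rcases eq_or_lt_of_le hj.2 with h | h
      · subst h
        simp only [Finset.coe_Icc, Set.mem_sdiff, Set.mem_Icc, Set.mem_ofPred_eq, NFCseq.tower,
          hno]
        simp
        omega
      · have := hout₁ j hj.1 (by omega)
        simp only [Finset.coe_Icc, Set.mem_sdiff, Set.mem_Icc, Set.mem_ofPred_eq, NFCseq.tower,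
          this.2]
        simp
        omega) (Finset.Icc_subset_Icc le_rfl (by omega))
    have h1 : b + 1 ∈ Finset.Icc a (b + 1) := by simp; omega
    rw [this] at h1
    simp at h1
  have h0 := enter_zero hz hb.2 hin
  have hp := S.toNFCseq.hgt_pos n
  have hrun (j : ℤ) (h1 : b < j) (h2 : j ≤ b + S.hgt n) : (z j).1 n ≠ none := by
    have := run_up hz h0 (j - (b + 1)).toNat (by omega)
    rw [show b + 1 + ((j - (b + 1)).toNat : ℤ) = j by omega] at this
    simp [this]
  have htop : (z (b + S.hgt n + 1)).1 n = none := by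
    have := run_up hz h0 (S.hgt n - 1) (by omega)
    rw [show b + 1 + ((S.hgt n - 1 : ℕ) : ℤ) = b + S.hgt n by omega] at this
    rw [← hz]
    exact S.exits_top _ n hs this
  have hcgt : b + S.hgt n < c := by
    by_contra hcon
    exact hrun c hbc (by omega) hc.2
  refine ⟨Finset.Icc (b + 1) (b + S.hgt n), ⟨⟨b + 1, _, by omega, rfl⟩, ?_, ?_⟩, ?_, ?_⟩
  · intro j hj
    simp only [Finset.coe_Icc, Set.mem_Icc] at hj
    refine ⟨hrun j (by omega) hj.2, ?_⟩
    simp only [Finset.coe_Icc, Set.mem_Icc]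
    omega
  · rintro J' ⟨a', b', hab', rfl⟩ hJ' hsub
    have hsub' := (Finset.Icc_subset_Icc_iff (by omega)).1 hsub
    have hmem (j : ℤ) (h1 : a' ≤ j) (h2 : j ≤ b') : (z j).1 n ≠ none :=
      (hJ' (show j ∈ ((Finset.Icc a' b' : Finset ℤ) : Set ℤ) by simp [h1, h2])).1
    have e1 : a' = b + 1 := by
      by_contra hne
      exact hmem b (by omega) (by omega) hb.2
    have e2 : b' = b + S.hgt n := by
      by_contra hne
      exact hmem _ (by omega) (by omega) htop
    rw [e1, e2]
  · simp
  · intro p hp q hq w hw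
    simp only [Finset.mem_Icc] at hp hq hw
    omega

/-- While a point climbs into tower `m`, its level increases by one at each step. -/
theorem climb_level (hz : ∀ j, S.T (z j) = z (j + 1)) {m : ℕ} {I : Finset ℤ}
    (h1 : ∀ j ∈ I, z j ∈ S.tower m)
    (h2 : ¬ ∃ j : ℤ, j ∈ I ∧ j + 1 ∈ I ∧ z j ∈ S.level m (S.hgt m - 1) ∧
      z (j + 1) ∈ S.level m 0)
    {a : ℤ} {q : ℕ} (hq : (z a).1 m = some q) (t : ℕ)
    (ht : ∀ t' ≤ t, a + (t' : ℤ) ∈ I) : (z (a + t)).1 m = some (q + t) := by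
  induction t with
  | zero => simpa using hq
  | succ t ih =>
    have ih := ih fun t' h => ht t' (by omega)
    have hm := ht (t + 1) le_rfl
    have hcast : a + ((t + 1 : ℕ) : ℤ) = a + t + 1 := by push_cast; ring
    rw [hcast] at hm ⊢
    have hlt := S.toNFCseq.lt_hgt _ ih
    by_cases hc : q + t + 1 < S.hgt m
    · have := (S.step _ m).1 _ ih hc
      rw [hz] at this
      exact this
    · exfalso
      obtain ⟨v, hv⟩ := Option.ne_none_iff_exists'.1 (h1 _ hm)
      cases v with
      | zero =>
        refine h2 ⟨a + t, ht t (by omega), hm, ?_, hv⟩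
        change (z (a + t)).1 m = _
        rw [ih]
        congr 1
        omega
      | succ v =>
        have hb := S.toNFCseq.lt_hgt _ hv
        rw [← hz] at hv
        have := (S.step _ m).2 v hv
        rw [ih, Option.some.injEq] at this
        omega

/-- While a point climbs into tower `n_{L+1}`, the holes in its visits to tower `n_L` have size at
most `spa n_L + 1`. -/
theorem holesSmall (hz : ∀ j, S.T (z j) = z (j + 1)) {L : ℕ} {I : Finset ℤ}
    (h1 : ∀ j ∈ I, z j ∈ S.tower (S.nseq (L + 1)))
    (h2 : ¬ ∃ j : ℤ, j ∈ I ∧ j + 1 ∈ I ∧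
      z j ∈ S.level (S.nseq (L + 1)) (S.hgt (S.nseq (L + 1)) - 1) ∧
      z (j + 1) ∈ S.level (S.nseq (L + 1)) 0) :
    HolesSmall {j | z j ∈ S.tower (S.nseq L)} I (S.spa (S.nseq L) + 1) := by
  rintro H ⟨⟨a, b, hab, rfl⟩, hs, -⟩
  by_contra hcon
  simp only [Int.card_Icc, not_le] at hcon
  set n := S.nseq L with hn
  have hout (j : ℤ) (ha : a ≤ j) (hb : j ≤ b) : j ∈ I ∧ (z j).1 n = none := by
    have := hs (show j ∈ ((Finset.Icc a b : Finset ℤ) : Set ℤ) by simp [ha, hb])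
    simpa [NFCseq.tower] using this
  obtain ⟨q, hq⟩ := Option.ne_none_iff_exists'.1 (h1 a (hout a le_rfl hab).1)
  have hlev (t : ℕ) (ht : t ≤ S.spa n + 1) :
      (z (a + t)).1 (S.nseq (L + 1)) = some (q + t) :=
    climb_level hz h1 h2 hq t fun t' ht' => (hout _ (by omega) (by omega)).1
  have hlt := S.toNFCseq.nseq_strictMono (Nat.lt_add_one L)
  obtain ⟨d, hd⟩ : ∃ d, S.nseq (L + 1) = n + d + 1 := ⟨S.nseq (L + 1) - n - 1, by omega⟩
  obtain ⟨-, -, -, hw⟩ := S.toNFCseq.window_hits n d fun r hr hr' =>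
    S.toNFCseq.spa_between (L := L) hr (by omega)
  have hbd := S.toNFCseq.lt_hgt _ (hlev _ le_rfl)
  obtain ⟨t, ht, hne⟩ := hw q (by rw [← hd]; omega)
  apply hne
  have hnone := (hout (a + t) (by omega) (by omega)).2
  have hl := hlev t ht
  rw [hd] at hl
  rw [S.toNFCseq.eq_down _ n (d + 1), ← Nat.add_assoc, hl] at hnone
  exact hnone

end NFC

theorem NFCseq.tower_mono (P : NFCseq) : Monotone P.tower :=
  monotone_nat_of_le_succ fun n x hx h => hx (by rw [x.2.1 n, h]; rfl)

/-- With `c_ℓ = h_{n_{ℓ̲+ℓ−1}}` and `s_ℓ = h_{n_{ℓ̲+ℓ−1} − k(ℓ̲+ℓ−1)} + 1`: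
if `x_i` climbs into tower `n_{ℓ̲+ℓ}` along an interval `I`, then
`F_i = {j : T^j x_i ∈ C_{n_ℓ̲}}` is of order `ℓ` inside `I`. -/
theorem stmt15 (S : NFCX) (d : ℕ) (hd : 2 ≤ d)
    (o : ℤ → S.toNFC.Xd d) (ho : ∀ j : ℤ, S.toNFC.Td d (o j) = o (j + 1))
    (hx : ∀ i : Fin d, (o 0) i ∈ S.Xinf)
    (lb : ℕ) (hlb : 1 ≤ lb) :
    ∀ I : Finset ℤ, IsIntervalZ I → ∀ i : Fin d, ∀ ℓ : ℕ, 1 ≤ ℓ →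
      S.toNFC.Climbs d o i (S.nseq (lb + ℓ)) I →
      IsOrder
        (fun m => S.toNFC.toNFCseq.hgt (S.nseq (lb + m - 1)))
        (fun m => S.toNFC.toNFCseq.hgt
          (S.nseq (lb + m - 1) - S.toNFC.toNFCseq.kOf (lb + m - 1)) + 1)
        ℓ
        {j : ℤ | (o j) i ∈ S.toNFC.toNFCseq.tower (S.nseq lb)} I := by
  intro I hI i ℓ hℓ hcl
  have hz (j : ℤ) : S.T ((fun j => o j i) j) = (fun j => o j i) (j + 1) :=
    congrFun (ho j) i
  have hspa (L : ℕ) (hL : 1 ≤ L) : 0 < S.spa (S.nseq L) := by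
    rw [S.toNFCseq.spa_nseq hL]
    exact S.toNFCseq.hgt_pos _
  induction ℓ, hℓ using Nat.le_induction generalizing I with
  | base =>
    have hs := NFC.holesSmall hz hcl.1 hcl.2
    rw [S.toNFCseq.spa_nseq hlb] at hs
    exact ⟨hs, NFC.holesSeparated hz (hspa lb hlb) hI⟩
  | succ ℓ hℓ ih =>
    obtain ⟨k, rfl⟩ : ∃ k, ℓ = k + 1 := ⟨ℓ - 1, by omega⟩
    have hL : 1 ≤ lb + (k + 1) := by omega
    have hs := NFC.holesSmall (L := lb + (k + 1)) hz hcl.1 hcl.2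
    rw [S.toNFCseq.spa_nseq hL] at hs
    refine ⟨{j | o j i ∈ S.tower (S.nseq (lb + (k + 1)))}, ?_, hs,
      NFC.holesSeparated hz (hspa _ hL) hI, ?_⟩
    · intro j hj
      exact S.toNFCseq.tower_mono (S.toNFCseq.nseq_strictMono.monotone (by omega)) hj
    · intro J hJ
      have hin (j : ℤ) (hj : j ∈ J) : o j i ∈ S.tower (S.nseq (lb + (k + 1))) :=
        (hJ.2.1 (Finset.mem_coe.2 hj)).1
      refine ih J hJ.1 ⟨hin, ?_⟩
      -- the spacers above tower `n_L` exclude passing from its top level to its bottom level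
      rintro ⟨j, -, hj, htop, -⟩
      have := S.exits_top _ _ (hspa _ hL) htop
      rw [hz] at this
      exact hin _ hj this
end
end
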